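/- Let α ∈ (0,1). There exist κ > 0 and σ > 0 such that for all t > 0, 0 < W_{-α,1-α}(-t) ≤ κ e^{-σ t^{1/(1-α)}}. -/

import Mathlib

open Real Filter Topology

/-- The Wright function `W_{λ,μ}(z) = ∑ z^n / (n! Γ(λn+μ))`.
(In Mathlib, `Real.Gamma` vanishes at nonpositive integers, so `1/Γ(s) = 0` there.) -/
noncomputable def wrightFn (l μ z : ℝ) : ℝ :=
  ∑' n : ℕ, z ^ n / (n.factorial * Real.Gamma (l * n + μ))

/-!
Expanding Hankel's integral for `1/Γ` along the negative real axis gives `W_{-α,1-α}(-t)` as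
`1/π` times the integral of `Im exp (exp w - t exp (α w) + α w)` over the line `Im w = π`, where
`ζ = exp w` is Hankel's variable. The integrand is entire in `w` and real on `ℝ`, so the line may be
deformed into the curve of steepest descent in the strip `0 < Im w < π` on which
`exp w - t exp (α w)` is real. There the phase equals `-t^{1/(1-α)} A(φ)`, with `A` the Zolotarev
function, and the result is the formula
`π W_{-α,1-α}(-t) = t^{α/(1-α)} / (1-α) ∫₀^π A(φ) exp (-t^{1/(1-α)} A(φ)) dφ`.
Its integrand is positive, and concavity of the sine bounds `A` below by the positive constant
`α^{α/(1-α)} (1-α)`, which yields the exponential decay for `t ≥ 1`; on `t ≤ 1` boundedness of the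
Wright function suffices.
-/

open MeasureTheory Set
open Complex (I)

section ExponentialVariable

lemma integral_exp_smul_comp_exp {E : Type*} [NormedAddCommGroup E] [NormedSpace ℝ E] (g : ℝ → E) :
    ∫ x : ℝ, exp x • g (exp x) = ∫ y in Ioi 0, g y := by
  rw [← range_exp, ← image_univ, integral_image_eq_integral_abs_deriv_smul MeasurableSet.univ
    (fun x _ => (hasDerivAt_exp x).hasDerivWithinAt) exp_injective.injOn]
  simp only [abs_exp, setIntegral_univ]

lemma integrable_exp_smul_comp_exp_iff {E : Type*} [NormedAddCommGroup E] [NormedSpace ℝ E]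
    {g : ℝ → E} : Integrable (fun x : ℝ => exp x • g (exp x)) ↔ IntegrableOn g (Ioi 0) := by
  rw [← range_exp, ← image_univ, integrableOn_image_iff_integrableOn_abs_deriv_smul
    MeasurableSet.univ (fun x _ => (hasDerivAt_exp x).hasDerivWithinAt) exp_injective.injOn]
  simp only [abs_exp, integrableOn_univ]

lemma exp_mul_sub_mul_exp_eq_rpow (s c x : ℝ) :
    exp (s * x - c * exp x) = exp x ^ s * exp (-c * exp x) := by
  rw [← exp_mul, ← exp_add]
  ring_nf

lemma exp_mul_sub_mul_exp_eq_smul (s c x : ℝ) :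
    exp (s * x - c * exp x) = exp x • (exp x ^ (s - 1) * exp (-c * exp x)) := by
  rw [exp_mul_sub_mul_exp_eq_rpow, rpow_sub_one (exp_ne_zero x), smul_eq_mul]
  field_simp

lemma integral_exp_mul_sub_exp {s : ℝ} (hs : 0 < s) :
    ∫ x : ℝ, exp (s * x - exp x) = Gamma s := by
  have h := integral_exp_smul_comp_exp fun y : ℝ => y ^ (s - 1) * exp (-1 * y)
  simp_rw [← exp_mul_sub_mul_exp_eq_smul, one_mul] at h
  rw [h, Gamma_eq_integral hs]
  simp_rw [neg_one_mul, mul_comm]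

lemma integrable_exp_mul_sub_mul_exp {s c : ℝ} (hs : 0 < s) (hc : 0 < c) :
    Integrable fun x : ℝ => exp (s * x - c * exp x) := by
  simp_rw [exp_mul_sub_mul_exp_eq_smul]
  rw [integrable_exp_smul_comp_exp_iff (g := fun y : ℝ => y ^ (s - 1) * exp (-c * y))]
  simpa only [rpow_one] using
    integrableOn_rpow_mul_exp_neg_mul_rpow (s := s - 1) (by linarith) one_pos hc

lemma tendsto_exp_mul_sub_mul_exp_atTop (s : ℝ) {c : ℝ} (hc : 0 < c) :
    Tendsto (fun x : ℝ => exp (s * x - c * exp x)) atTop (𝓝 0) := by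
  simp_rw [exp_mul_sub_mul_exp_eq_rpow]
  exact (tendsto_rpow_mul_exp_neg_mul_atTop_nhds_zero s c hc).comp tendsto_exp_atTop

lemma exists_mul_exp_mul_le {α ε : ℝ} (hα₀ : 0 ≤ α) (hα₁ : α < 1) (b : ℝ) (hε : 0 < ε) :
    ∃ K, ∀ x : ℝ, b * exp (α * x) ≤ ε * exp x + K := by
  have hlim : Tendsto (fun x : ℝ => b * exp (-((1 - α) * x))) atTop (𝓝 0) := by
    simpa using (tendsto_exp_neg_atTop_nhds_zero.comp
      (tendsto_id.const_mul_atTop (sub_pos.2 hα₁))).const_mul b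
  obtain ⟨x₀, hx₀⟩ := eventually_atTop.1 (hlim.eventually_le_const hε)
  refine ⟨|b| * exp (α * x₀), fun x => ?_⟩
  rcases le_total x₀ x with hx | hx
  · calc b * exp (α * x) = b * exp (-((1 - α) * x)) * exp x := by
          rw [mul_assoc, ← exp_add]; ring_nf
      _ ≤ ε * exp x := by gcongr; exact hx₀ x hx
      _ ≤ ε * exp x + |b| * exp (α * x₀) := le_add_of_nonneg_right (by positivity)
  · calc b * exp (α * x) ≤ |b| * exp (α * x₀) := by gcongr; exact le_abs_self b
      _ ≤ ε * exp x + |b| * exp (α * x₀) := le_add_of_nonneg_left (by positivity)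

lemma exists_exp_neg_mul_exp_add_le {α c c' : ℝ} (hα₀ : 0 ≤ α) (hα₁ : α < 1) (hc : c' < c)
    (b s : ℝ) :
    ∃ C, ∀ x : ℝ, exp (-c * exp x + b * exp (α * x) + s * x) ≤ C * exp (s * x - c' * exp x) := by
  obtain ⟨K, hK⟩ := exists_mul_exp_mul_le hα₀ hα₁ b (sub_pos.2 hc)
  refine ⟨exp K, fun x => ?_⟩
  rw [← exp_add, exp_le_exp]
  linarith [hK x]

end ExponentialVariable

section ContourShift

variable {f F : ℂ → ℂ}

lemma hasDerivAt_im_comp {γ : ℝ → ℂ} {γ' : ℂ} {s : ℝ} (hF : ∀ w, HasDerivAt F (f w) w)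
    (hγ : HasDerivAt γ γ' s) :
    HasDerivAt (fun s => (F (γ s)).im) (f (γ s) * γ').im s :=
  Complex.imCLM.hasFDerivAt.comp_hasDerivAt s ((hF (γ s)).comp s hγ)

lemma exists_primitive_im_ofReal_eq_zero (hf : Differentiable ℂ f)
    (hf_real : ∀ x : ℝ, (f x).im = 0) :
    ∃ F : ℂ → ℂ, (∀ w, HasDerivAt F (f w) w) ∧ ∀ x : ℝ, (F x).im = 0 := by
  obtain ⟨F, hF₀, hF⟩ := hf.isExactOn_univ.with_val_at 0 0
  replace hF : ∀ w, HasDerivAt F (f w) w := fun w => hF w (mem_univ w)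
  refine ⟨F, hF, fun x => ?_⟩
  have hderiv (y : ℝ) : HasDerivAt (fun y : ℝ => (F y).im) 0 y := by
    simpa [hf_real y] using hasDerivAt_im_comp hF (hasDerivAt_id y).ofReal_comp
  have hconst := is_const_of_deriv_eq_zero (fun y => (hderiv y).differentiableAt)
    (fun y => (hderiv y).deriv) x 0
  simpa [hF₀] using hconst

lemma hasDerivAt_ofReal_add_mul_I (x θ : ℝ) :
    HasDerivAt (fun θ : ℝ => (x + θ * I : ℂ)) I θ := by
  simpa using ((hasDerivAt_id θ).ofReal_comp.mul_const I).const_add (x : ℂ)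

lemma abs_im_sub_im_le_of_norm_le {x a b C : ℝ} (hF : ∀ w, HasDerivAt F (f w) w) (hab : a ≤ b)
    (hC : ∀ θ ∈ Icc a b, ‖f (x + θ * I)‖ ≤ C) :
    |(F (x + b * I)).im - (F (x + a * I)).im| ≤ C * (b - a) := by
  have hmvt := (convex_Icc a b).norm_image_sub_le_of_norm_hasDerivWithin_le
    (f := fun θ : ℝ => F (x + θ * I)) (f' := fun θ : ℝ => f (x + θ * I) * I) (C := C)
    (fun θ _ => ((hF _).comp θ (hasDerivAt_ofReal_add_mul_I x θ)).hasDerivWithinAt)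
    (fun θ hθ => by simpa using hC θ hθ) (left_mem_Icc.2 hab) (right_mem_Icc.2 hab)
  rw [norm_of_nonneg (sub_nonneg.2 hab)] at hmvt
  rw [← Complex.sub_im]
  exact (Complex.abs_im_le_norm _).trans hmvt

lemma tendsto_im_primitive_horizontal {b : ℝ} {B : ℝ → ℝ} (hb : 0 ≤ b)
    (hF : ∀ w, HasDerivAt F (f w) w) (hF_real : ∀ x : ℝ, (F x).im = 0)
    (hB : ∀ x : ℝ, ∀ θ ∈ Icc 0 b, ‖f (x + θ * I)‖ ≤ B x) (hB_bot : Tendsto B atBot (𝓝 0))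
    (hf_int : Integrable fun x : ℝ => (f (x + b * I)).im) :
    Tendsto (fun x : ℝ => (F (x + b * I)).im) atTop (𝓝 (∫ x : ℝ, (f (x + b * I)).im)) := by
  have hderiv (x : ℝ) : HasDerivAt (fun x : ℝ => (F (x + b * I)).im) (f (x + b * I)).im x := by
    simpa using hasDerivAt_im_comp hF ((hasDerivAt_id x).ofReal_comp.add_const (b * I))
  have hbot : Tendsto (fun x : ℝ => (F (x + b * I)).im) atBot (𝓝 0) := by
    refine squeeze_zero_norm (fun x => ?_) (by simpa using hB_bot.mul_const b)
    simpa [hF_real] using abs_im_sub_im_le_of_norm_le hF hb (hB x)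
  have htop := tendsto_limUnder_of_hasDerivAt_of_integrableOn_Ioi (a := 0)
    (fun x _ => hderiv x) hf_int.integrableOn
  rwa [integral_of_hasDerivAt_of_tendsto hderiv hf_int hbot htop, sub_zero]

lemma tendsto_im_horizontal_sub_im_curve {a b : ℝ} {X B : ℝ → ℝ} (hab : a < b)
    (hF : ∀ w, HasDerivAt F (f w) w) (hB : ∀ x : ℝ, ∀ θ ∈ Icc a b, ‖f (x + θ * I)‖ ≤ B x)
    (hB_top : Tendsto B atTop (𝓝 0)) (hX_top : Tendsto X (𝓝[<] b) atTop) :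
    Tendsto (fun θ : ℝ => (F (X θ + b * I)).im - (F (X θ + θ * I)).im) (𝓝[<] b) (𝓝 0) := by
  refine squeeze_zero_norm' ?_ (by simpa using (hB_top.comp hX_top).mul_const (b - a))
  filter_upwards [Ioo_mem_nhdsLT hab] with θ hθ
  have hB_nonneg : 0 ≤ B (X θ) := (norm_nonneg _).trans (hB (X θ) b ⟨hab.le, le_rfl⟩)
  calc |(F (X θ + b * I)).im - (F (X θ + θ * I)).im| ≤ B (X θ) * (b - θ) :=
        abs_im_sub_im_le_of_norm_le hF hθ.2.le fun η hη => hB _ η ⟨hθ.1.le.trans hη.1, hη.2⟩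
    _ ≤ B (X θ) * (b - a) := by gcongr; exact hθ.1.le

theorem integral_im_curve_eq_integral_im_horizontal {a b x₀ : ℝ} {X X' B₀ B₁ : ℝ → ℝ}
    (hb : 0 < b) (hab : a < b) (hf : Differentiable ℂ f) (hf_real : ∀ x : ℝ, (f x).im = 0)
    (hB₀ : ∀ x : ℝ, ∀ θ ∈ Icc 0 b, ‖f (x + θ * I)‖ ≤ B₀ x) (hB₀_bot : Tendsto B₀ atBot (𝓝 0))
    (hB₁ : ∀ x : ℝ, ∀ θ ∈ Icc a b, ‖f (x + θ * I)‖ ≤ B₁ x) (hB₁_top : Tendsto B₁ atTop (𝓝 0))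
    (hX : ∀ θ ∈ Ioo 0 b, HasDerivAt X (X' θ) θ) (hX₀ : Tendsto X (𝓝[>] 0) (𝓝 x₀))
    (hX_top : Tendsto X (𝓝[<] b) atTop)
    (hcurve : IntervalIntegrable (fun θ : ℝ => (f (X θ + θ * I) * (X' θ + I)).im) volume 0 b)
    (hline : Integrable fun x : ℝ => (f (x + b * I)).im) :
    ∫ θ in 0..b, (f (X θ + θ * I) * (X' θ + I)).im = ∫ x : ℝ, (f (x + b * I)).im := by
  -- `F` is real on `ℝ`, where the curve starts, and `B₀ → 0` makes `(F (x + b * I)).im` vanish as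
  -- `x → -∞`, so both integrals equal the limit of `(F (x + b * I)).im` as `x → ∞`.
  obtain ⟨F, hF, hF_real⟩ := exists_primitive_im_ofReal_eq_zero hf hf_real
  have hderiv : ∀ θ ∈ Ioo 0 b, HasDerivAt (fun θ : ℝ => (F (X θ + θ * I)).im)
      (f (X θ + θ * I) * (X' θ + I)).im θ := fun θ hθ => by
    refine hasDerivAt_im_comp hF ((hX θ hθ).ofReal_comp.add ?_)
    simpa using (hasDerivAt_id θ).ofReal_comp.mul_const I
  have hstart : Tendsto (fun θ : ℝ => (F (X θ + θ * I)).im) (𝓝[>] 0) (𝓝 0) := by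
    have hcont : Continuous fun w => (F w).im :=
      Complex.continuous_im.comp (Differentiable.continuous fun w => (hF w).differentiableAt)
    have hpath : Tendsto (fun θ : ℝ => (X θ + θ * I : ℂ)) (𝓝[>] 0) (𝓝 (x₀ + (0 : ℝ) * I)) :=
      (Complex.continuous_ofReal.tendsto x₀ |>.comp hX₀).add
        ((Complex.continuous_ofReal.tendsto 0 |>.mono_left nhdsWithin_le_nhds).mul_const I)
    simpa [Function.comp_def, hF_real] using (hcont.tendsto _).comp hpath
  have hend : Tendsto (fun θ : ℝ => (F (X θ + θ * I)).im) (𝓝[<] b)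
      (𝓝 (∫ x : ℝ, (f (x + b * I)).im)) := by
    simpa using ((tendsto_im_primitive_horizontal hb.le hF hF_real hB₀ hB₀_bot hline).comp
      hX_top).sub (tendsto_im_horizontal_sub_im_curve hab hF hB₁ hB₁_top hX_top)
  rw [intervalIntegral.integral_eq_sub_of_hasDerivAt_of_tendsto hb hderiv hcurve hstart hend,
    sub_zero]

end ContourShift

/-- The integrand of Hankel's contour integral
`2πi W_{-α,1-ν}(z) = ∫ exp (ζ + z ζ^α) ζ^(ν-1) dζ`, in the logarithmic coordinate `ζ = exp w`, in
which it is an entire function of `w`. -/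
noncomputable def hankelKernel (α ν z : ℝ) (w : ℂ) : ℂ :=
  Complex.exp (Complex.exp w + z * Complex.exp (α * w) + ν * w)

section HankelKernel

variable {α ν : ℝ}

lemma exp_ofReal_add_ofReal_mul_I_re (x y : ℝ) :
    (Complex.exp (x + y * I)).re = exp x * cos y := by
  simp [Complex.exp_re]

lemma exp_ofReal_add_ofReal_mul_I_im (x y : ℝ) :
    (Complex.exp (x + y * I)).im = exp x * sin y := by
  simp [Complex.exp_im]

lemma ofReal_mul_ofReal_add_mul_I (a x y : ℝ) :
    (a : ℂ) * (x + y * I) = (a * x : ℝ) + (a * y : ℝ) * I := by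
  push_cast
  ring

lemma differentiable_hankelKernel (α ν z : ℝ) : Differentiable ℂ (hankelKernel α ν z) := by
  unfold hankelKernel
  fun_prop

lemma hankelKernel_ofReal_im (α ν z x : ℝ) : (hankelKernel α ν z x).im = 0 := by
  have hreal : hankelKernel α ν z x = (exp (exp x + z * exp (α * x) + ν * x) : ℝ) := by
    simp [hankelKernel]
  rw [hreal, Complex.ofReal_im]

lemma norm_hankelKernel_le (α ν z x θ : ℝ) :
    ‖hankelKernel α ν z (x + θ * I)‖ ≤ exp (cos θ * exp x + |z| * exp (α * x) + ν * x) := by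
  have hbound : z * (exp (α * x) * cos (α * θ)) ≤ |z| * exp (α * x) :=
    calc z * (exp (α * x) * cos (α * θ)) ≤ |z * (exp (α * x) * cos (α * θ))| := le_abs_self _
      _ = |z| * (exp (α * x) * |cos (α * θ)|) := by rw [abs_mul, abs_mul, abs_exp]
      _ ≤ |z| * (exp (α * x) * 1) := by gcongr; exact abs_cos_le_one _
      _ = |z| * exp (α * x) := by rw [mul_one]
  rw [hankelKernel, Complex.norm_exp, exp_le_exp, ofReal_mul_ofReal_add_mul_I,
    ofReal_mul_ofReal_add_mul_I]
  simp only [Complex.add_re, Complex.re_ofReal_mul, exp_ofReal_add_ofReal_mul_I_re,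
    Complex.ofReal_re, Complex.I_re, mul_zero, add_zero]
  linarith

lemma norm_hankelKernel_le_exp (α ν z x θ : ℝ) :
    ‖hankelKernel α ν z (x + θ * I)‖ ≤ exp (exp x + |z| * exp (α * x) + ν * x) := by
  refine (norm_hankelKernel_le α ν z x θ).trans ?_
  gcongr
  exact mul_le_of_le_one_left (exp_pos x).le (cos_le_one θ)

lemma tendsto_exp_exp_add_mul_exp_add_atBot (hα : 0 < α) (hν : 0 < ν) (b : ℝ) :
    Tendsto (fun x : ℝ => exp (exp x + b * exp (α * x) + ν * x)) atBot (𝓝 0) := by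
  have hexp : Tendsto (fun x : ℝ => exp x + b * exp (α * x)) atBot (𝓝 (0 + b * 0)) :=
    tendsto_exp_atBot.add
      ((tendsto_exp_atBot.comp (tendsto_id.const_mul_atBot hα)).const_mul b)
  exact tendsto_exp_atBot.comp (hexp.add_atBot (tendsto_id.const_mul_atBot hν))

lemma exists_norm_hankelKernel_le {c c' : ℝ} (hα₀ : 0 ≤ α) (hα₁ : α < 1) (hc : c' < c) (ν R : ℝ) :
    ∃ C, ∀ z x θ : ℝ, |z| ≤ R → cos θ ≤ -c →
      ‖hankelKernel α ν z (x + θ * I)‖ ≤ C * exp (ν * x - c' * exp x) := by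
  obtain ⟨C, hC⟩ := exists_exp_neg_mul_exp_add_le hα₀ hα₁ hc R ν
  refine ⟨C, fun z x θ hz hθ => (norm_hankelKernel_le α ν z x θ).trans (le_trans ?_ (hC x))⟩
  gcongr

lemma exists_norm_hankelKernel_pi_le (hα₀ : 0 ≤ α) (hα₁ : α < 1) (ν R : ℝ) :
    ∃ C, ∀ z x : ℝ, |z| ≤ R →
      ‖hankelKernel α ν z (x + π * I)‖ ≤ C * exp (ν * x - 1 / 2 * exp x) := by
  obtain ⟨C, hC⟩ := exists_norm_hankelKernel_le hα₀ hα₁ (one_half_lt_one (α := ℝ)) ν R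
  exact ⟨C, fun z x hz => hC z x π hz cos_pi.le⟩

lemma integrable_hankelKernel_pi_im (hα₀ : 0 ≤ α) (hα₁ : α < 1) (hν : 0 < ν) (z : ℝ) :
    Integrable fun x : ℝ => (hankelKernel α ν z (x + π * I)).im := by
  obtain ⟨C, hC⟩ := exists_norm_hankelKernel_pi_le hα₀ hα₁ ν |z|
  refine ((integrable_exp_mul_sub_mul_exp hν one_half_pos).const_mul C).mono'
    (Continuous.aestronglyMeasurable ?_)
    (ae_of_all _ fun x => (Complex.abs_im_le_norm _).trans (hC z x le_rfl))
  unfold hankelKernel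
  fun_prop

lemma hasSum_hankelKernel (α ν z : ℝ) (w : ℂ) :
    HasSum (fun n : ℕ => ((z ^ n / n.factorial : ℝ) : ℂ) *
      Complex.exp (Complex.exp w + ((ν + α * n : ℝ) : ℂ) * w)) (hankelKernel α ν z w) := by
  have hsum := (NormedSpace.expSeries_div_hasSum_exp (z * Complex.exp (α * w))).mul_left
    (Complex.exp (Complex.exp w + ν * w))
  rw [← Complex.exp_eq_exp_ℂ, ← Complex.exp_add, add_right_comm] at hsum
  refine hsum.congr_fun fun n => ?_
  have hexp : Complex.exp (Complex.exp w + ((ν + α * n : ℝ) : ℂ) * w) =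
      Complex.exp (Complex.exp w + ν * w) * Complex.exp (α * w) ^ n := by
    rw [← Complex.exp_nat_mul, ← Complex.exp_add]
    push_cast
    ring_nf
  rw [hexp, mul_pow]
  push_cast
  ring

lemma exp_exp_add_mul_pi_im (s x : ℝ) :
    (Complex.exp (Complex.exp (x + π * I) + s * (x + π * I))).im =
      sin (π * s) * exp (s * x - exp x) := by
  have hexp : Complex.exp (x + π * I) + s * (x + π * I) =
      ((s * x - exp x : ℝ) : ℂ) + ((π * s : ℝ) : ℂ) * I := by
    rw [Complex.exp_add, Complex.exp_pi_mul_I]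
    push_cast
    ring
  rw [hexp, exp_ofReal_add_ofReal_mul_I_im, mul_comm]

lemma hasSum_hankelKernel_pi_im (α ν z x : ℝ) :
    HasSum (fun n : ℕ => z ^ n / n.factorial *
      (sin (π * (ν + α * n)) * exp ((ν + α * n) * x - exp x)))
      (hankelKernel α ν z (x + π * I)).im := by
  have hsum := Complex.hasSum_im (hasSum_hankelKernel α ν z (x + π * I))
  simpa only [Complex.im_ofReal_mul, exp_exp_add_mul_pi_im] using hsum

end HankelKernel

section HankelRepresentation

variable {α ν : ℝ}

lemma inv_Gamma_one_sub {s : ℝ} (hs : 0 < s) :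
    (Gamma (1 - s))⁻¹ = sin (π * s) * Gamma s / π := by
  have hΓ := (Gamma_pos_of_pos hs).ne'
  have hreflection := Gamma_mul_Gamma_one_sub s
  rw [eq_div_of_mul_eq hΓ ((mul_comm _ _).trans hreflection), inv_div, div_div_eq_mul_div,
    mul_comm]

lemma pi_mul_wrightFn_coeff_eq_integral (hα : 0 ≤ α) (hν : 0 < ν) (z : ℝ) (n : ℕ) :
    π * (z ^ n / (n.factorial * Gamma (-α * n + (1 - ν)))) =
      ∫ x : ℝ, z ^ n / n.factorial * (sin (π * (ν + α * n)) * exp ((ν + α * n) * x - exp x)) := by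
  have hs : 0 < ν + α * n := by positivity
  rw [integral_const_mul, integral_const_mul, integral_exp_mul_sub_exp hs,
    show -α * n + (1 - ν) = 1 - (ν + α * n) by ring, ← div_div, div_eq_mul_inv _ (Gamma _),
    inv_Gamma_one_sub hs]
  field_simp

lemma hasSum_wrightFn_majorant (α ν z x : ℝ) :
    HasSum (fun n : ℕ => |z| ^ n / n.factorial * exp ((ν + α * n) * x - exp x))
      (exp (-1 * exp x + |z| * exp (α * x) + ν * x)) := by
  have hsum := (NormedSpace.expSeries_div_hasSum_exp (|z| * exp (α * x))).mul_left
    (exp (ν * x - exp x))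
  rw [← exp_eq_exp_ℝ, ← exp_add] at hsum
  rw [show -1 * exp x + |z| * exp (α * x) + ν * x = ν * x - exp x + |z| * exp (α * x) by ring]
  refine hsum.congr_fun fun n => ?_
  have hexp : exp ((ν + α * n) * x - exp x) = exp (ν * x - exp x) * exp (α * x) ^ n := by
    rw [← exp_nat_mul, ← exp_add]
    ring_nf
  rw [hexp, mul_pow]
  ring

lemma integrable_wrightFn_majorant (hα₀ : 0 ≤ α) (hα₁ : α < 1) (hν : 0 < ν) (b : ℝ) :
    Integrable fun x : ℝ => exp (-1 * exp x + b * exp (α * x) + ν * x) := by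
  obtain ⟨C, hC⟩ := exists_exp_neg_mul_exp_add_le hα₀ hα₁ (one_half_lt_one (α := ℝ)) b ν
  refine ((integrable_exp_mul_sub_mul_exp hν one_half_pos).const_mul C).mono'
    (Continuous.aestronglyMeasurable (by fun_prop)) (ae_of_all _ fun x => ?_)
  simpa only [norm_eq_abs, abs_exp] using hC x

theorem pi_mul_wrightFn_eq_integral_hankelKernel (hα₀ : 0 ≤ α) (hα₁ : α < 1) (hν : 0 < ν) (z : ℝ) :
    π * wrightFn (-α) (1 - ν) z = ∫ x : ℝ, (hankelKernel α ν z (x + π * I)).im := by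
  have hsum : HasSum (fun n : ℕ => ∫ x : ℝ, z ^ n / n.factorial *
      (sin (π * (ν + α * n)) * exp ((ν + α * n) * x - exp x)))
      (∫ x : ℝ, (hankelKernel α ν z (x + π * I)).im) := by
    refine hasSum_integral_of_dominated_convergence
      (fun (n : ℕ) x => |z| ^ n / n.factorial * exp ((ν + α * n) * x - exp x))
      (fun n => Continuous.aestronglyMeasurable (by fun_prop))
      (fun n => ae_of_all _ fun x => ?_)
      (ae_of_all _ fun x => (hasSum_wrightFn_majorant α ν z x).summable) ?_
      (ae_of_all _ fun x => hasSum_hankelKernel_pi_im α ν z x)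
    · rw [norm_eq_abs, abs_mul, abs_mul, abs_div, abs_pow, Nat.abs_cast, abs_exp]
      gcongr
      exact mul_le_of_le_one_left (exp_pos _).le (abs_sin_le_one _)
    · simp_rw [fun x => (hasSum_wrightFn_majorant α ν z x).tsum_eq]
      exact integrable_wrightFn_majorant hα₀ hα₁ hν |z|
  simp_rw [← pi_mul_wrightFn_coeff_eq_integral hα₀ hν] at hsum
  rw [wrightFn, ← tsum_mul_left, hsum.tsum_eq]

theorem exists_abs_wrightFn_le (hα₀ : 0 ≤ α) (hα₁ : α < 1) (hν : 0 < ν) (R : ℝ) :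
    ∃ C, ∀ z : ℝ, |z| ≤ R → |wrightFn (-α) (1 - ν) z| ≤ C := by
  obtain ⟨C, hC⟩ := exists_norm_hankelKernel_pi_le hα₀ hα₁ ν R
  refine ⟨(∫ x : ℝ, C * exp (ν * x - 1 / 2 * exp x)) / π, fun z hz => ?_⟩
  have habs : π * |wrightFn (-α) (1 - ν) z| = |π * wrightFn (-α) (1 - ν) z| := by
    rw [abs_mul, abs_of_pos pi_pos]
  rw [le_div_iff₀' pi_pos, habs, pi_mul_wrightFn_eq_integral_hankelKernel hα₀ hα₁ hν,
    ← norm_eq_abs]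
  exact norm_integral_le_of_norm_le ((integrable_exp_mul_sub_mul_exp hν one_half_pos).const_mul C)
    (ae_of_all _ fun x => (Complex.abs_im_le_norm _).trans (hC z x hz))

end HankelRepresentation

section Zolotarev

lemma mul_sin_le_sin_mul {β x : ℝ} (hβ₀ : 0 ≤ β) (hβ₁ : β ≤ 1) (hx : x ∈ Icc 0 π) :
    β * sin x ≤ sin (β * x) := by
  simpa using strictConcaveOn_sin_Icc.concaveOn.2 (left_mem_Icc.2 pi_pos.le) hx
    (sub_nonneg.2 hβ₁) hβ₀ (sub_add_cancel 1 β)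

/-- The ratio `sin (β φ) / sin φ`, out of which the Zolotarev function and the steepest descent
curve are built. It is meant for `φ ∈ (0, π)`. -/
noncomputable def sinRatio (β φ : ℝ) : ℝ := sin (β * φ) / sin φ

/-- The Zolotarev function `A` of the one-sided `α`-stable law, as it appears in Kanter's
representation; up to the scale `t ^ (1 / (1 - α))` it is the decay rate of the integrand along the
steepest descent curve. -/
noncomputable def zolotarev (α φ : ℝ) : ℝ :=
  sinRatio α φ ^ (α / (1 - α)) * sinRatio (1 - α) φ

/-- The curve `x = descentCurve α t φ`, `0 < φ < π`, of steepest descent for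
`exp w - t * exp (α * w)`, `w = x + i φ`: it is the zero set of the imaginary part. -/
noncomputable def descentCurve (α t φ : ℝ) : ℝ := (1 - α)⁻¹ * log (t * sinRatio α φ)

variable {α β t φ : ℝ}

lemma le_sinRatio (hβ₀ : 0 ≤ β) (hβ₁ : β ≤ 1) (hφ : φ ∈ Ioo 0 π) : β ≤ sinRatio β φ :=
  (le_div_iff₀ (sin_pos_of_mem_Ioo hφ)).2 (mul_sin_le_sin_mul hβ₀ hβ₁ (Ioo_subset_Icc_self hφ))

lemma sinRatio_pos (hβ₀ : 0 < β) (hβ₁ : β ≤ 1) (hφ : φ ∈ Ioo 0 π) : 0 < sinRatio β φ :=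
  hβ₀.trans_le (le_sinRatio hβ₀.le hβ₁ hφ)

lemma sin_mul_pos (hβ₀ : 0 < β) (hβ₁ : β ≤ 1) (hφ : φ ∈ Ioo 0 π) : 0 < sin (β * φ) :=
  (mul_pos hβ₀ (sin_pos_of_mem_Ioo hφ)).trans_le
    (mul_sin_le_sin_mul hβ₀.le hβ₁ (Ioo_subset_Icc_self hφ))

lemma sinRatio_one_sub (α : ℝ) (hφ : sin φ ≠ 0) :
    sinRatio (1 - α) φ = cos (α * φ) - cos φ * sinRatio α φ := by
  rw [sinRatio, sinRatio, one_sub_mul, sin_sub]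
  field_simp

lemma tendsto_sinRatio_zero (hβ : β ≠ 0) : Tendsto (sinRatio β) (𝓝[>] 0) (𝓝 β) := by
  have hsinc : Tendsto (fun φ => β * sinc (β * φ) / sinc φ) (𝓝[>] 0) (𝓝 β) := by
    have hcont : ContinuousAt (fun φ => β * sinc (β * φ) / sinc φ) 0 :=
      ContinuousAt.div (by fun_prop) (by fun_prop) (by simp)
    simpa using hcont.tendsto.mono_left nhdsWithin_le_nhds
  refine hsinc.congr' ?_
  filter_upwards [self_mem_nhdsWithin] with φ hφ
  have hφ₀ : φ ≠ 0 := ne_of_gt hφ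
  rw [sinc_of_ne_zero (mul_ne_zero hβ hφ₀), sinc_of_ne_zero hφ₀, sinRatio]
  field_simp

lemma tendsto_sinRatio_pi (hβ₀ : 0 < β) (hβ₁ : β < 1) :
    Tendsto (sinRatio β) (𝓝[<] π) atTop := by
  have hnum : Tendsto (fun φ => sin (β * φ)) (𝓝[<] π) (𝓝 (sin (β * π))) :=
    ((by fun_prop : Continuous fun φ => sin (β * φ)).tendsto π).mono_left nhdsWithin_le_nhds
  have hden : Tendsto sin (𝓝[<] π) (𝓝[>] 0) := by
    refine tendsto_nhdsWithin_iff.2 ⟨?_, ?_⟩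
    · simpa using (continuous_sin.tendsto π).mono_left nhdsWithin_le_nhds
    · filter_upwards [Ioo_mem_nhdsLT pi_pos] with φ hφ using sin_pos_of_mem_Ioo hφ
  exact hnum.pos_mul_atTop (sin_pos_of_pos_of_lt_pi (by positivity)
    (mul_lt_of_lt_one_left pi_pos hβ₁)) (tendsto_inv_nhdsGT_zero.comp hden)

lemma zolotarev_pos (hα₀ : 0 < α) (hα₁ : α < 1) (hφ : φ ∈ Ioo 0 π) : 0 < zolotarev α φ :=
  mul_pos (rpow_pos_of_pos (sinRatio_pos hα₀ hα₁.le hφ) _)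
    (sinRatio_pos (sub_pos.2 hα₁) (sub_le_self 1 hα₀.le) hφ)

lemma le_zolotarev (hα₀ : 0 < α) (hα₁ : α < 1) (hφ : φ ∈ Ioo 0 π) :
    α ^ (α / (1 - α)) * (1 - α) ≤ zolotarev α φ := by
  have hα₂ : 0 < 1 - α := sub_pos.2 hα₁
  exact mul_le_mul
    (rpow_le_rpow hα₀.le (le_sinRatio hα₀.le hα₁.le hφ) (div_pos hα₀ hα₂).le)
    (le_sinRatio hα₂.le (sub_le_self 1 hα₀.le) hφ) hα₂.le
    (rpow_nonneg (sinRatio_pos hα₀ hα₁.le hφ).le _)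

lemma measurable_zolotarev (α : ℝ) : Measurable (zolotarev α) := by
  unfold zolotarev sinRatio
  fun_prop

lemma exp_mul_descentCurve (hα₀ : 0 < α) (hα₁ : α < 1) (ht : 0 < t) (hφ : φ ∈ Ioo 0 π) :
    exp (α * descentCurve α t φ) = t ^ (α / (1 - α)) * sinRatio α φ ^ (α / (1 - α)) := by
  have hρ := sinRatio_pos hα₀ hα₁.le hφ
  rw [← mul_rpow ht.le hρ.le, rpow_def_of_pos (mul_pos ht hρ), descentCurve]
  ring_nf

lemma exp_descentCurve (hα₀ : 0 < α) (hα₁ : α < 1) (ht : 0 < t) (hφ : φ ∈ Ioo 0 π) :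
    exp (descentCurve α t φ) = t * sinRatio α φ * exp (α * descentCurve α t φ) := by
  have hα₂ : 1 - α ≠ 0 := (sub_pos.2 hα₁).ne'
  have hlog : descentCurve α t φ = log (t * sinRatio α φ) + α * descentCurve α t φ := by
    rw [descentCurve]
    field_simp
    ring
  nth_rw 1 [hlog]
  rw [exp_add, exp_log (mul_pos ht (sinRatio_pos hα₀ hα₁.le hφ))]

lemma hasDerivAt_descentCurve (hα₀ : 0 < α) (hα₁ : α < 1) (ht : 0 < t) (hφ : φ ∈ Ioo 0 π) :
    HasDerivAt (descentCurve α t) ((1 - α)⁻¹ * (α * cot (α * φ) - cot φ)) φ := by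
  have hsin := sin_pos_of_mem_Ioo hφ
  have hsin_mul := sin_mul_pos hα₀ hα₁.le hφ
  have hρ : HasDerivAt (sinRatio α)
      ((cos (α * φ) * α * sin φ - sin (α * φ) * cos φ) / sin φ ^ 2) φ :=
    (((hasDerivAt_id φ).const_mul α).sin.div (hasDerivAt_sin φ) hsin.ne').congr_deriv (by simp)
  refine (((hρ.const_mul t).log (mul_pos ht (sinRatio_pos hα₀ hα₁.le hφ)).ne').const_mul
    (1 - α)⁻¹).congr_deriv ?_
  rw [sinRatio, cot_eq_cos_div_sin, cot_eq_cos_div_sin]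
  field_simp

lemma tendsto_descentCurve_zero (hα : α ≠ 0) (ht : t ≠ 0) :
    Tendsto (descentCurve α t) (𝓝[>] 0) (𝓝 ((1 - α)⁻¹ * log (t * α))) :=
  (((tendsto_sinRatio_zero hα).const_mul t).log (mul_ne_zero ht hα)).const_mul _

lemma tendsto_descentCurve_pi (hα₀ : 0 < α) (hα₁ : α < 1) (ht : 0 < t) :
    Tendsto (descentCurve α t) (𝓝[<] π) atTop :=
  (tendsto_log_atTop.comp ((tendsto_sinRatio_pi hα₀ hα₁).const_mul_atTop ht)).const_mul_atTop
    (inv_pos.2 (sub_pos.2 hα₁))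

lemma rpow_one_div_one_sub (hα : α < 1) (ht : 0 < t) :
    t ^ (1 / (1 - α)) = t * t ^ (α / (1 - α)) := by
  have hα' : 1 - α ≠ 0 := (sub_pos.2 hα).ne'
  have hexponent : 1 / (1 - α) = 1 + α / (1 - α) := by
    field_simp
    ring
  rw [hexponent, rpow_add ht, rpow_one]

lemma rpow_mul_zolotarev (hα₀ : 0 < α) (hα₁ : α < 1) (ht : 0 < t) (hφ : φ ∈ Ioo 0 π) :
    t ^ (1 / (1 - α)) * zolotarev α φ =
      t * exp (α * descentCurve α t φ) * sinRatio (1 - α) φ := by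
  rw [exp_mul_descentCurve hα₀ hα₁ ht hφ, rpow_one_div_one_sub hα₁ ht, zolotarev]
  ring

lemma exp_sub_mul_exp_descentCurve (hα₀ : 0 < α) (hα₁ : α < 1) (ht : 0 < t) (hφ : φ ∈ Ioo 0 π) :
    Complex.exp (descentCurve α t φ + φ * I) -
      t * Complex.exp (α * (descentCurve α t φ + φ * I)) =
      (-(t ^ (1 / (1 - α)) * zolotarev α φ) : ℝ) := by
  have hsin := (sin_pos_of_mem_Ioo hφ).ne'
  have him : sinRatio α φ * sin φ = sin (α * φ) := div_mul_cancel₀ _ hsin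
  rw [ofReal_mul_ofReal_add_mul_I, rpow_mul_zolotarev hα₀ hα₁ ht hφ]
  apply Complex.ext
  · rw [Complex.sub_re, Complex.re_ofReal_mul, exp_ofReal_add_ofReal_mul_I_re,
      exp_ofReal_add_ofReal_mul_I_re, Complex.ofReal_re, exp_descentCurve hα₀ hα₁ ht hφ,
      sinRatio_one_sub α hsin]
    ring
  · rw [Complex.sub_im, Complex.im_ofReal_mul, exp_ofReal_add_ofReal_mul_I_im,
      exp_ofReal_add_ofReal_mul_I_im, Complex.ofReal_im, exp_descentCurve hα₀ hα₁ ht hφ, ← him]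
    ring

lemma hankelKernel_descentCurve (hα₀ : 0 < α) (hα₁ : α < 1) (ht : 0 < t) (ν : ℝ)
    (hφ : φ ∈ Ioo 0 π) :
    hankelKernel α ν (-t) (descentCurve α t φ + φ * I) =
      (exp (ν * descentCurve α t φ - t ^ (1 / (1 - α)) * zolotarev α φ) : ℝ) *
        Complex.exp ((ν * φ : ℝ) * I) := by
  rw [hankelKernel, Complex.ofReal_neg, neg_mul, ← sub_eq_add_neg,
    exp_sub_mul_exp_descentCurve hα₀ hα₁ ht hφ, ofReal_mul_ofReal_add_mul_I, ← add_assoc,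
    Complex.exp_add, Complex.ofReal_exp, ← Complex.ofReal_add, neg_add_eq_sub]

lemma deriv_descentCurve_mul_sin_add_cos (hα₀ : 0 < α) (hα₁ : α < 1) (ht : 0 < t)
    (hφ : φ ∈ Ioo 0 π) :
    deriv (descentCurve α t) φ * sin (α * φ) + cos (α * φ) = sinRatio (1 - α) φ / (1 - α) := by
  have hsin := (sin_pos_of_mem_Ioo hφ).ne'
  have hsin_mul := (sin_mul_pos hα₀ hα₁.le hφ).ne'
  have hα₂ : 1 - α ≠ 0 := (sub_pos.2 hα₁).ne'
  rw [(hasDerivAt_descentCurve hα₀ hα₁ ht hφ).deriv, sinRatio_one_sub α hsin, sinRatio,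
    cot_eq_cos_div_sin, cot_eq_cos_div_sin]
  field_simp
  ring

lemma hankelKernel_mul_deriv_descentCurve_im (hα₀ : 0 < α) (hα₁ : α < 1) (ht : 0 < t)
    (hφ : φ ∈ Ioo 0 π) :
    (hankelKernel α α (-t) (descentCurve α t φ + φ * I) * (deriv (descentCurve α t) φ + I)).im =
      t ^ (α / (1 - α)) / (1 - α) *
        (zolotarev α φ * exp (-(t ^ (1 / (1 - α)) * zolotarev α φ))) := by
  have him (r x y : ℝ) :
      ((r : ℂ) * Complex.exp (y * I) * (x + I)).im = r * (x * sin y + cos y) := by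
    rw [mul_assoc, Complex.im_ofReal_mul, Complex.mul_im, Complex.exp_ofReal_mul_I_re,
      Complex.exp_ofReal_mul_I_im]
    simp only [Complex.add_re, Complex.add_im, Complex.ofReal_re, Complex.ofReal_im, Complex.I_re,
      Complex.I_im]
    ring
  rw [hankelKernel_descentCurve hα₀ hα₁ ht α hφ, him,
    deriv_descentCurve_mul_sin_add_cos hα₀ hα₁ ht hφ, sub_eq_add_neg, exp_add,
    exp_mul_descentCurve hα₀ hα₁ ht hφ]
  unfold zolotarev
  ring

lemma mul_exp_neg_mul_le {a c s : ℝ} (hs : 0 < s) (hca : c ≤ a) :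
    a * exp (-(s * a)) ≤ 2 / s * exp (-(c / 2 * s)) := by
  have hlin : s * a / 2 ≤ exp (s * a / 2) := by linarith [add_one_le_exp (s * a / 2)]
  calc a * exp (-(s * a)) = 2 / s * (s * a / 2 * exp (-(s * a))) := by field_simp
    _ ≤ 2 / s * (exp (s * a / 2) * exp (-(s * a))) := by gcongr
    _ = 2 / s * exp (-(a / 2 * s)) := by rw [← exp_add]; ring_nf
    _ ≤ 2 / s * exp (-(c / 2 * s)) := by gcongr

lemma intervalIntegrable_zolotarev_mul_exp_neg (hα₀ : 0 < α) (hα₁ : α < 1) {s : ℝ} (hs : 0 < s) :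
    IntervalIntegrable (fun φ => zolotarev α φ * exp (-(s * zolotarev α φ))) volume 0 π := by
  have hmeas : Measurable fun φ => zolotarev α φ * exp (-(s * zolotarev α φ)) := by
    have hzolotarev := measurable_zolotarev α
    fun_prop
  rw [intervalIntegrable_iff_integrableOn_Ioo_of_le pi_pos.le]
  refine Measure.integrableOn_of_bounded (M := 2 / s * exp (-(0 / 2 * s)))
    measure_Ioo_lt_top.ne hmeas.aestronglyMeasurable
    ((ae_restrict_iff' measurableSet_Ioo).2 <| ae_of_all _ fun φ hφ => ?_)
  have hA := zolotarev_pos hα₀ hα₁ hφ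
  rw [norm_of_nonneg (mul_pos hA (exp_pos _)).le]
  exact mul_exp_neg_mul_le hs hA.le

lemma cos_le_neg_half {θ : ℝ} (hθ : θ ∈ Icc (2 * π / 3) π) : cos θ ≤ -(1 / 2) := by
  calc cos θ ≤ cos (π - π / 3) :=
        cos_le_cos_of_nonneg_of_le_pi (by linarith [pi_pos]) hθ.2 (by linarith [hθ.1])
    _ = -(1 / 2) := by rw [cos_pi_sub, cos_pi_div_three]

theorem pi_mul_wrightFn_neg_eq_integral_zolotarev (hα₀ : 0 < α) (hα₁ : α < 1) (ht : 0 < t) :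
    π * wrightFn (-α) (1 - α) (-t) = t ^ (α / (1 - α)) / (1 - α) *
      ∫ φ in 0..π, zolotarev α φ * exp (-(t ^ (1 / (1 - α)) * zolotarev α φ)) := by
  have hintegrand : EqOn
      (fun φ : ℝ => (hankelKernel α α (-t) (descentCurve α t φ + φ * I) *
        (deriv (descentCurve α t) φ + I)).im)
      (fun φ => t ^ (α / (1 - α)) / (1 - α) *
        (zolotarev α φ * exp (-(t ^ (1 / (1 - α)) * zolotarev α φ)))) (Ioo 0 π) :=
    fun φ hφ => hankelKernel_mul_deriv_descentCurve_im hα₀ hα₁ ht hφ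
  obtain ⟨C, hC⟩ := exists_norm_hankelKernel_le hα₀.le hα₁
    (by norm_num : (1 / 4 : ℝ) < 1 / 2) α |-t|
  have hC_top : Tendsto (fun x : ℝ => C * exp (α * x - 1 / 4 * exp x)) atTop (𝓝 0) := by
    simpa using (tendsto_exp_mul_sub_mul_exp_atTop α (by norm_num : (0 : ℝ) < 1 / 4)).const_mul C
  have hcurve := ((intervalIntegrable_zolotarev_mul_exp_neg hα₀ hα₁
    (rpow_pos_of_pos ht (1 / (1 - α)))).const_mul (t ^ (α / (1 - α)) / (1 - α))).congr_uIoo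
    (uIoo_of_le pi_pos.le ▸ hintegrand.symm)
  have hshift := integral_im_curve_eq_integral_im_horizontal pi_pos
    (by linarith [pi_pos] : 2 * π / 3 < π) (differentiable_hankelKernel α α (-t))
    (hankelKernel_ofReal_im α α (-t)) (fun x θ _ => norm_hankelKernel_le_exp α α (-t) x θ)
    (tendsto_exp_exp_add_mul_exp_add_atBot hα₀ hα₀ |-t|)
    (fun x θ hθ => hC (-t) x θ le_rfl (cos_le_neg_half hθ)) hC_top
    (fun φ hφ => (hasDerivAt_descentCurve hα₀ hα₁ ht hφ).differentiableAt.hasDerivAt)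
    (tendsto_descentCurve_zero hα₀.ne' ht.ne') (tendsto_descentCurve_pi hα₀ hα₁ ht) hcurve
    (integrable_hankelKernel_pi_im hα₀.le hα₁ hα₀ (-t))
  rw [pi_mul_wrightFn_eq_integral_hankelKernel hα₀.le hα₁ hα₀, ← hshift,
    ← intervalIntegral.integral_const_mul]
  exact intervalIntegral.integral_congr_Ioo_of_le pi_pos.le hintegrand

theorem wrightFn_neg_pos (hα₀ : 0 < α) (hα₁ : α < 1) (ht : 0 < t) :
    0 < wrightFn (-α) (1 - α) (-t) := by
  have hint : 0 < ∫ φ in 0..π, zolotarev α φ * exp (-(t ^ (1 / (1 - α)) * zolotarev α φ)) :=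
    intervalIntegral.intervalIntegral_pos_of_pos_on
      (intervalIntegrable_zolotarev_mul_exp_neg hα₀ hα₁ (rpow_pos_of_pos ht _))
      (fun φ hφ => mul_pos (zolotarev_pos hα₀ hα₁ hφ) (exp_pos _)) pi_pos
  refine pos_of_mul_pos_right ?_ pi_pos.le
  rw [pi_mul_wrightFn_neg_eq_integral_zolotarev hα₀ hα₁ ht]
  exact mul_pos (div_pos (rpow_pos_of_pos ht _) (sub_pos.2 hα₁)) hint

theorem wrightFn_neg_le (hα₀ : 0 < α) (hα₁ : α < 1) (ht : 0 < t) :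
    wrightFn (-α) (1 - α) (-t) ≤
      2 / ((1 - α) * t) * exp (-(α ^ (α / (1 - α)) * (1 - α) / 2 * t ^ (1 / (1 - α)))) := by
  have hα₂ : 0 < 1 - α := sub_pos.2 hα₁
  set s := t ^ (1 / (1 - α)) with hs_def
  have hs : 0 < s := rpow_pos_of_pos ht _
  have hint : ∫ φ in 0..π, zolotarev α φ * exp (-(s * zolotarev α φ)) ≤
      π * (2 / s * exp (-(α ^ (α / (1 - α)) * (1 - α) / 2 * s))) := by
    have hmono := intervalIntegral.integral_mono_on_of_le_Ioo pi_pos.le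
      (intervalIntegrable_zolotarev_mul_exp_neg hα₀ hα₁ hs) intervalIntegrable_const
      fun φ hφ => mul_exp_neg_mul_le hs (le_zolotarev hα₀ hα₁ hφ)
    simpa only [intervalIntegral.integral_const, sub_zero, smul_eq_mul] using hmono
  refine le_of_mul_le_mul_left ?_ pi_pos
  rw [pi_mul_wrightFn_neg_eq_integral_zolotarev hα₀ hα₁ ht, ← hs_def]
  calc _ ≤ t ^ (α / (1 - α)) / (1 - α) *
        (π * (2 / s * exp (-(α ^ (α / (1 - α)) * (1 - α) / 2 * s)))) := by gcongr
    _ = _ := by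
      rw [hs_def, rpow_one_div_one_sub hα₁ ht]
      field_simp

end Zolotarev

lemma exists_forall_le_mul_exp_neg_mul_rpow {f : ℝ → ℝ} {A B σ p : ℝ} (hA : 0 < A) (hσ : 0 ≤ σ)
    (hp : 0 ≤ p) (hf_le_one : ∀ t, 0 < t → t ≤ 1 → f t ≤ B)
    (hf_one_le : ∀ t, 1 ≤ t → f t ≤ A * exp (-σ * t ^ p)) :
    ∃ κ, 0 < κ ∧ ∀ t, 0 < t → f t ≤ κ * exp (-σ * t ^ p) := by
  have hκ : 0 < max A (B * exp σ) := lt_max_of_lt_left hA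
  refine ⟨max A (B * exp σ), hκ, fun t ht => ?_⟩
  rcases le_total t 1 with ht₁ | ht₁
  · have hpow : t ^ p ≤ 1 := rpow_le_one ht.le ht₁ hp
    calc f t ≤ B := hf_le_one t ht ht₁
      _ = B * exp σ * exp (-σ * 1) := by rw [mul_assoc, ← exp_add]; simp
      _ ≤ max A (B * exp σ) * exp (-σ * 1) := by gcongr; exact le_max_right _ _
      _ ≤ max A (B * exp σ) * exp (-σ * t ^ p) := by
        gcongr _ * exp ?_
        exact mul_le_mul_of_nonpos_left hpow (neg_nonpos.2 hσ)
  · calc f t ≤ A * exp (-σ * t ^ p) := hf_one_le t ht₁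
      _ ≤ max A (B * exp σ) * exp (-σ * t ^ p) := by gcongr; exact le_max_left _ _

theorem stmt9 (α : ℝ) (hα : α ∈ Set.Ioo (0 : ℝ) 1) :
    ∃ κ σ : ℝ, 0 < κ ∧ 0 < σ ∧ ∀ t : ℝ, 0 < t →
      0 < wrightFn (-α) (1 - α) (-t) ∧
      wrightFn (-α) (1 - α) (-t) ≤ κ * Real.exp (-σ * t ^ (1 / (1 - α))) := by
  obtain ⟨hα₀, hα₁⟩ := hα
  have hα₂ : 0 < 1 - α := sub_pos.2 hα₁
  obtain ⟨B, hB⟩ := exists_abs_wrightFn_le hα₀.le hα₁ hα₀ 1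
  have hσ : 0 < α ^ (α / (1 - α)) * (1 - α) / 2 := by positivity
  obtain ⟨κ, hκ, hle⟩ := exists_forall_le_mul_exp_neg_mul_rpow
    (f := fun t => wrightFn (-α) (1 - α) (-t)) (div_pos two_pos hα₂) hσ.le (one_div_pos.2 hα₂).le
    (fun t ht ht₁ => (le_abs_self _).trans (hB (-t) (by rwa [abs_neg, abs_of_pos ht])))
    (fun t ht₁ => (wrightFn_neg_le hα₀ hα₁ (one_pos.trans_le ht₁)).trans (by
      rw [neg_mul]
      gcongr
      exact le_mul_of_one_le_right hα₂.le ht₁))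
  exact ⟨κ, _, hκ, hσ, fun t ht => ⟨wrightFn_neg_pos hα₀ hα₁ ht, hle t ht⟩⟩
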